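/- arXiv:1807.06345 — 2 statements merged into one kernel-verified Lean document; each statement's English description precedes it below -/
import Mathlib

section
/- First marginal entropy inequality for the classical triangle scenario: let A, B, C be mutually independent finite random variables and let X = f(B, C), Y = g(A, C), Z = h(A, B) for deterministic functions f, g, h. Then -H(X) - H(Y) - H(Z) + H(X,Y) + H(X,Z) ≥ 0, where H denotes the Shannon entropy and H(X,Y) the entropy of the joint variable. -/
open MeasureTheory ProbabilityTheory

/-- Shannon entropy of a finite-valued random variable `X` under the measure `μ`. -/
noncomputable def entH {Ω E : Type*} [MeasurableSpace Ω] [Fintype E]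
    (μ : Measure Ω) (X : Ω → E) : ℝ :=
  ∑ e : E, Real.negMulLog (μ (X ⁻¹' {e})).toReal

/-- Mutual information `I(X : Y)`. -/
noncomputable def mutInf {Ω E F : Type*} [MeasurableSpace Ω] [Fintype E] [Fintype F]
    (μ : Measure Ω) (X : Ω → E) (Y : Ω → F) : ℝ :=
  entH μ X + entH μ Y - entH μ (fun ω => (X ω, Y ω))

/-- Conditional Shannon entropy `H(X | Y)`. -/
noncomputable def condEnt {Ω E F : Type*} [MeasurableSpace Ω] [Fintype E] [Fintype F]
    (μ : Measure Ω) (X : Ω → E) (Y : Ω → F) : ℝ :=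
  entH μ (fun ω => (X ω, Y ω)) - entH μ Y

/-- Conditional mutual information `I(X : Y | Z)`. -/
noncomputable def condMutInf {Ω E F G : Type*} [MeasurableSpace Ω]
    [Fintype E] [Fintype F] [Fintype G]
    (μ : Measure Ω) (X : Ω → E) (Y : Ω → F) (Z : Ω → G) : ℝ :=
  entH μ (fun ω => (X ω, Z ω)) + entH μ (fun ω => (Y ω, Z ω))
    - entH μ (fun ω => (X ω, Y ω, Z ω)) - entH μ Z

/-!
In terms of conditional entropies the claim reads `H(X) ≤ H(X | Y) + H(X | Z)`. As `Y` is a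
function of `(A, C)` and `A` is independent of `(X, C)`, we have
`H(X | Y) ≥ H(X | A, C) = H(X | C)`; likewise `H(X | Z) ≥ H(X | A, B) = H(X | B)`. Finally, the
independent variables `B` and `C` cannot tell more about `X` separately than jointly,
`I(X : B) + I(X : C) ≤ I(X : B, C) ≤ H(X)`, which amounts to `H(X) ≤ H(X | B) + H(X | C)`.
-/

section Gibbs

lemma negMulLog_add_mul_log_le_sub {p q : ℝ} (hp : 0 ≤ p) (hq : 0 ≤ q) (hpq : q = 0 → p = 0) :
    Real.negMulLog p + p * Real.log q ≤ q - p := by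
  rcases hp.eq_or_lt with rfl | hp
  · simpa using hq
  have hq' : 0 < q := hq.lt_of_ne' fun h => hp.ne' (hpq h)
  calc Real.negMulLog p + p * Real.log q
      = p * Real.log (q / p) := by rw [Real.log_div hq'.ne' hp.ne', Real.negMulLog]; ring
    _ ≤ p * (q / p - 1) := by gcongr; exact Real.log_le_sub_one_of_pos (div_pos hq' hp)
    _ = q - p := by field_simp

lemma sum_negMulLog_le_neg_sum_mul_log {ι : Type*} {s : Finset ι} {p q : ι → ℝ}
    (hp : ∀ i ∈ s, 0 ≤ p i) (hq : ∀ i ∈ s, 0 ≤ q i) (hpq : ∀ i ∈ s, q i = 0 → p i = 0)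
    (hsum : ∑ i ∈ s, q i ≤ ∑ i ∈ s, p i) :
    ∑ i ∈ s, Real.negMulLog (p i) ≤ -∑ i ∈ s, p i * Real.log (q i) := by
  have h := Finset.sum_le_sum fun i hi =>
    negMulLog_add_mul_log_le_sub (hp i hi) (hq i hi) (hpq i hi)
  rw [Finset.sum_add_distrib, Finset.sum_sub_distrib] at h
  linarith

end Gibbs

section ProbMass

variable {Ω E F : Type*} [MeasurableSpace Ω] {μ : Measure Ω}

/-- The probability mass function `e ↦ μ(X = e)` of a discrete random variable `X`, as a real
number; it is the function whose entropy `entH μ X` measures. -/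
noncomputable def probMass (μ : Measure Ω) (X : Ω → E) (e : E) : ℝ :=
  μ.real (X ⁻¹' {e})

lemma probMass_nonneg (X : Ω → E) (e : E) : 0 ≤ probMass μ X e :=
  measureReal_nonneg

lemma probMass_le_probMass_comp [IsFiniteMeasure μ] (X : Ω → E) (φ : E → F) (e : E) :
    probMass μ X e ≤ probMass μ (fun ω => φ (X ω)) (φ e) :=
  measureReal_mono fun _ hω => congrArg φ hω

lemma probMass_comp_of_injective (X : Ω → E) {φ : E → F} (hφ : Function.Injective φ) (e : E) :
    probMass μ (fun ω => φ (X ω)) (φ e) = probMass μ X e := by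
  unfold probMass
  congr 1
  ext ω
  exact hφ.eq_iff

lemma probMass_prodMk_of_indepFun [MeasurableSpace E] [MeasurableSingletonClass E]
    [MeasurableSpace F] [MeasurableSingletonClass F] {X : Ω → E} {Y : Ω → F}
    (hXY : IndepFun X Y μ) (e : E) (f : F) :
    probMass μ (fun ω => (X ω, Y ω)) (e, f) = probMass μ X e * probMass μ Y f := by
  unfold probMass
  rw [← Set.singleton_prod_singleton, Set.mk_preimage_prod, measureReal_def,
    hXY.measure_inter_preimage_eq_mul _ _ (measurableSet_singleton e) (measurableSet_singleton f),
    ENNReal.toReal_mul, measureReal_def, measureReal_def]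

variable [Fintype E] [MeasurableSpace E] [MeasurableSingletonClass E]

lemma probMass_comp_eq_sum [IsFiniteMeasure μ] [DecidableEq F] {X : Ω → E} (hX : Measurable X)
    (φ : E → F) (f : F) :
    probMass μ (fun ω => φ (X ω)) f = ∑ e with φ e = f, probMass μ X e := by
  unfold probMass
  rw [sum_measureReal_preimage_singleton _ fun e _ => hX (measurableSet_singleton e)]
  congr 1
  ext ω
  simp

lemma sum_measure_preimage_singleton_inter {X : Ω → E} (hX : Measurable X) (s : Set Ω) :
    ∑ e, μ (X ⁻¹' {e} ∩ s) = μ s := by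
  have hX' (e : E) : MeasurableSet (X ⁻¹' {e}) := hX (measurableSet_singleton e)
  have h := sum_measure_preimage_singleton (μ := μ.restrict s) Finset.univ fun e _ => hX' e
  simpa [Measure.restrict_apply, hX'] using h

lemma sum_probMass_prodMk_left [IsFiniteMeasure μ] {X : Ω → E} (hX : Measurable X) (Y : Ω → F)
    (f : F) : ∑ e, probMass μ (fun ω => (X ω, Y ω)) (e, f) = probMass μ Y f := by
  simp only [probMass, measureReal_def, ← Set.singleton_prod_singleton, Set.mk_preimage_prod]
  rw [← ENNReal.toReal_sum fun _ _ => measure_ne_top _ _,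
    sum_measure_preimage_singleton_inter hX]

lemma sum_probMass [IsFiniteMeasure μ] {X : Ω → E} (hX : Measurable X) :
    ∑ e, probMass μ X e = μ.real Set.univ := by
  unfold probMass
  rw [sum_measureReal_preimage_singleton _ fun e _ => hX (measurableSet_singleton e)]
  simp

lemma sum_probMass_mul_comp [IsFiniteMeasure μ] [Fintype F] {X : Ω → E} (hX : Measurable X)
    (φ : E → F) (u : F → ℝ) :
    ∑ e, probMass μ X e * u (φ e) = ∑ f, probMass μ (fun ω => φ (X ω)) f * u f := by
  classical
  rw [← Finset.sum_fiberwise Finset.univ φ]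
  refine Finset.sum_congr rfl fun f _ => ?_
  rw [probMass_comp_eq_sum hX, Finset.sum_mul]
  exact Finset.sum_congr rfl fun e he => by rw [(Finset.mem_filter.mp he).2]

end ProbMass

section Entropy

variable {Ω E F : Type*} [MeasurableSpace Ω] {μ : Measure Ω} [Fintype E] [Fintype F]

lemma entH_eq_sum_probMass (X : Ω → E) : entH μ X = ∑ e, Real.negMulLog (probMass μ X e) :=
  rfl

lemma entH_comp_of_injective (X : Ω → E) {φ : E → F} (hφ : Function.Injective φ) :
    entH μ (fun ω => φ (X ω)) = entH μ X := by
  refine (Fintype.sum_of_injective φ hφ _ _ (fun f hf => ?_) fun e => ?_).symm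
  · have : (fun ω => φ (X ω)) ⁻¹' {f} = ∅ :=
      Set.eq_empty_of_forall_notMem fun ω hω => hf ⟨X ω, hω⟩
    simp [this]
  · exact congrArg Real.negMulLog (probMass_comp_of_injective X hφ e).symm

variable [MeasurableSpace E] [MeasurableSingletonClass E]

lemma sum_probMass_mul_log_probMass_comp [IsFiniteMeasure μ] {X : Ω → E} (hX : Measurable X)
    (φ : E → F) :
    ∑ e, probMass μ X e * Real.log (probMass μ (fun ω => φ (X ω)) (φ e)) =
      -entH μ (fun ω => φ (X ω)) := by
  rw [sum_probMass_mul_comp hX φ fun f => Real.log (probMass μ (fun ω => φ (X ω)) f),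
    entH_eq_sum_probMass, ← Finset.sum_neg_distrib]
  simp [Real.negMulLog]

variable [MeasurableSpace F] [MeasurableSingletonClass F]

lemma entH_prodMk_of_indepFun [IsProbabilityMeasure μ] {X : Ω → E} {Y : Ω → F}
    (hX : Measurable X) (hY : Measurable Y) (hXY : IndepFun X Y μ) :
    entH μ (fun ω => (X ω, Y ω)) = entH μ X + entH μ Y := by
  simp only [entH_eq_sum_probMass, Fintype.sum_prod_type, probMass_prodMk_of_indepFun hXY,
    Real.negMulLog_mul, Finset.sum_add_distrib, ← Finset.sum_mul, ← Finset.mul_sum,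
    sum_probMass hX, sum_probMass hY, probReal_univ, one_mul]

end Entropy

section CondMutInf

variable {Ω E F G : Type*} [MeasurableSpace Ω] {μ : Measure Ω}

/-- The joint mass function that `X`, `Y`, `Z` would have if, with the same laws of `(X, Z)` and
`(Y, Z)`, the variables `X` and `Y` were conditionally independent given `Z`; `condMutInf μ X Y Z`
is the divergence of the true joint law from it. Division by zero makes it vanish where `Z` has no
mass. -/
noncomputable def condIndepMass (μ : Measure Ω) (X : Ω → E) (Y : Ω → F) (Z : Ω → G)
    (x : E × F × G) : ℝ :=
  probMass μ (fun ω => (X ω, Z ω)) (x.1, x.2.2) * probMass μ (fun ω => (Y ω, Z ω)) x.2 /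
    probMass μ Z x.2.2

lemma condIndepMass_nonneg (X : Ω → E) (Y : Ω → F) (Z : Ω → G) (x : E × F × G) :
    0 ≤ condIndepMass μ X Y Z x :=
  div_nonneg (mul_nonneg (probMass_nonneg _ _) (probMass_nonneg _ _)) (probMass_nonneg _ _)

variable [IsFiniteMeasure μ]

lemma probMass_marginals_pos (X : Ω → E) (Y : Ω → F) (Z : Ω → G) {x : E × F × G}
    (hx : probMass μ (fun ω => (X ω, Y ω, Z ω)) x ≠ 0) :
    0 < probMass μ (fun ω => (X ω, Z ω)) (x.1, x.2.2) ∧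
      0 < probMass μ (fun ω => (Y ω, Z ω)) x.2 ∧ 0 < probMass μ Z x.2.2 := by
  have hpos := (probMass_nonneg _ _).lt_of_ne' hx
  exact ⟨hpos.trans_le (probMass_le_probMass_comp _ (fun x => (x.1, x.2.2)) x),
    hpos.trans_le (probMass_le_probMass_comp _ Prod.snd x),
    hpos.trans_le (probMass_le_probMass_comp _ (fun x => x.2.2) x)⟩

lemma probMass_eq_zero_of_condIndepMass_eq_zero (X : Ω → E) (Y : Ω → F) (Z : Ω → G)
    {x : E × F × G} (hx : condIndepMass μ X Y Z x = 0) :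
    probMass μ (fun ω => (X ω, Y ω, Z ω)) x = 0 := by
  by_contra h
  obtain ⟨hXZ, hYZ, hZ⟩ := probMass_marginals_pos X Y Z h
  exact (div_pos (mul_pos hXZ hYZ) hZ).ne' hx

lemma probMass_mul_log_condIndepMass (X : Ω → E) (Y : Ω → F) (Z : Ω → G) (x : E × F × G) :
    probMass μ (fun ω => (X ω, Y ω, Z ω)) x * Real.log (condIndepMass μ X Y Z x) =
      probMass μ (fun ω => (X ω, Y ω, Z ω)) x *
          Real.log (probMass μ (fun ω => (X ω, Z ω)) (x.1, x.2.2)) +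
        probMass μ (fun ω => (X ω, Y ω, Z ω)) x *
          Real.log (probMass μ (fun ω => (Y ω, Z ω)) x.2) -
        probMass μ (fun ω => (X ω, Y ω, Z ω)) x * Real.log (probMass μ Z x.2.2) := by
  by_cases h : probMass μ (fun ω => (X ω, Y ω, Z ω)) x = 0
  · simp [h]
  obtain ⟨hXZ, hYZ, hZ⟩ := probMass_marginals_pos X Y Z h
  rw [condIndepMass, Real.log_div (mul_pos hXZ hYZ).ne' hZ.ne', Real.log_mul hXZ.ne' hYZ.ne']
  ring

variable [Fintype E] [Fintype F] [Fintype G]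
  [MeasurableSpace E] [MeasurableSingletonClass E] [MeasurableSpace F] [MeasurableSingletonClass F]
  [MeasurableSpace G] [MeasurableSingletonClass G]
  {X : Ω → E} {Y : Ω → F} {Z : Ω → G}

lemma sum_condIndepMass (hX : Measurable X) (hY : Measurable Y) (hZ : Measurable Z) :
    ∑ x, condIndepMass μ X Y Z x = μ.real Set.univ := by
  simp only [condIndepMass, Fintype.sum_prod_type_right, ← Finset.sum_div, ← Finset.sum_mul,
    ← Finset.mul_sum, sum_probMass_prodMk_left hX Z, sum_probMass_prodMk_left hY Z,
    mul_self_div_self, sum_probMass hZ]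

lemma sum_probMass_mul_log_condIndepMass (hX : Measurable X) (hY : Measurable Y)
    (hZ : Measurable Z) :
    ∑ x, probMass μ (fun ω => (X ω, Y ω, Z ω)) x * Real.log (condIndepMass μ X Y Z x) =
      entH μ Z - entH μ (fun ω => (X ω, Z ω)) - entH μ (fun ω => (Y ω, Z ω)) := by
  have hXYZ : Measurable fun ω => (X ω, Y ω, Z ω) := hX.prodMk (hY.prodMk hZ)
  have hsumXZ := sum_probMass_mul_log_probMass_comp (μ := μ) hXYZ fun x => (x.1, x.2.2)
  have hsumYZ := sum_probMass_mul_log_probMass_comp (μ := μ) hXYZ Prod.snd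
  have hsumZ := sum_probMass_mul_log_probMass_comp (μ := μ) hXYZ fun x => x.2.2
  simp only [probMass_mul_log_condIndepMass, Finset.sum_sub_distrib, Finset.sum_add_distrib,
    hsumXZ, hsumYZ, hsumZ]
  ring

theorem condMutInf_nonneg (hX : Measurable X) (hY : Measurable Y) (hZ : Measurable Z) :
    0 ≤ condMutInf μ X Y Z := by
  have hXYZ : Measurable fun ω => (X ω, Y ω, Z ω) := hX.prodMk (hY.prodMk hZ)
  have gibbs : entH μ (fun ω => (X ω, Y ω, Z ω)) ≤
      -∑ x, probMass μ (fun ω => (X ω, Y ω, Z ω)) x * Real.log (condIndepMass μ X Y Z x) := by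
    rw [entH_eq_sum_probMass]
    exact sum_negMulLog_le_neg_sum_mul_log (fun x _ => probMass_nonneg _ x)
      (fun x _ => condIndepMass_nonneg X Y Z x)
      (fun _ _ => probMass_eq_zero_of_condIndepMass_eq_zero X Y Z)
      (by rw [sum_condIndepMass hX hY hZ, sum_probMass hXYZ])
  rw [sum_probMass_mul_log_condIndepMass hX hY hZ] at gibbs
  unfold condMutInf
  linarith

end CondMutInf

section CondEnt

variable {Ω E F G : Type*} [MeasurableSpace Ω] {μ : Measure Ω} [Fintype E] [Fintype F] [Fintype G]
  [MeasurableSpace E] [MeasurableSingletonClass E] [MeasurableSpace F] [MeasurableSingletonClass F]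
  {X : Ω → E} {Y : Ω → F}

lemma condEnt_nonneg [IsFiniteMeasure μ] (hX : Measurable X) (hY : Measurable Y) :
    0 ≤ condEnt μ X Y := by
  have hself : condMutInf μ X X Y = condEnt μ X Y := by
    have hdup : entH μ (fun ω => (X ω, X ω, Y ω)) = entH μ (fun ω => (X ω, Y ω)) :=
      entH_comp_of_injective (fun ω => (X ω, Y ω)) (φ := fun p => (p.1, p))
        (Function.LeftInverse.injective (g := Prod.snd) fun _ => rfl)
    unfold condMutInf condEnt
    linarith
  exact hself ▸ condMutInf_nonneg hX hX hY

lemma condEnt_le_condEnt_comp [IsFiniteMeasure μ] (hX : Measurable X) (hY : Measurable Y)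
    (φ : F → G) : condEnt μ X Y ≤ condEnt μ X (fun ω => φ (Y ω)) := by
  let _ : MeasurableSpace G := ⊤
  have hφY : Measurable fun ω => φ (Y ω) := (measurable_of_finite φ).comp hY
  have hY_φY : entH μ (fun ω => (Y ω, φ (Y ω))) = entH μ Y :=
    entH_comp_of_injective Y (φ := fun y => (y, φ y))
      (Function.LeftInverse.injective (g := Prod.fst) fun _ => rfl)
  have hXY_φY : entH μ (fun ω => (X ω, Y ω, φ (Y ω))) = entH μ (fun ω => (X ω, Y ω)) :=
    entH_comp_of_injective (fun ω => (X ω, Y ω)) (φ := fun p => (p.1, p.2, φ p.2))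
      (Function.LeftInverse.injective (g := fun q => (q.1, q.2.1)) fun _ => rfl)
  have hmut := condMutInf_nonneg (μ := μ) hX hY hφY
  unfold condMutInf at hmut
  unfold condEnt
  linarith

variable [IsProbabilityMeasure μ] [MeasurableSpace G] [MeasurableSingletonClass G] {Z : Ω → G}

lemma condEnt_prodMk_of_indepFun (hX : Measurable X) (hY : Measurable Y) (hZ : Measurable Z)
    (hZXY : IndepFun Z (fun ω => (X ω, Y ω)) μ) :
    condEnt μ X (fun ω => (Z ω, Y ω)) = condEnt μ X Y := by
  have hZY : IndepFun Z Y μ := hZXY.comp measurable_id measurable_snd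
  have hswap : entH μ (fun ω => (X ω, Z ω, Y ω)) = entH μ (fun ω => (Z ω, X ω, Y ω)) :=
    entH_comp_of_injective (fun ω => (Z ω, X ω, Y ω)) (φ := fun q => (q.2.1, q.1, q.2.2))
      (Function.LeftInverse.injective (g := fun q => (q.2.1, q.1, q.2.2)) fun _ => rfl)
  unfold condEnt
  rw [hswap, entH_prodMk_of_indepFun hZ (hX.prodMk hY) hZXY, entH_prodMk_of_indepFun hZ hY hZY]
  ring

lemma entH_le_condEnt_add_condEnt_of_indepFun (hX : Measurable X) (hY : Measurable Y)
    (hZ : Measurable Z) (hYZ : IndepFun Y Z μ) :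
    entH μ X ≤ condEnt μ X Y + condEnt μ X Z := by
  have hswapY : entH μ (fun ω => (Y ω, X ω)) = entH μ (fun ω => (X ω, Y ω)) :=
    entH_comp_of_injective (fun ω => (X ω, Y ω)) (φ := Prod.swap) Prod.swap_injective
  have hswapZ : entH μ (fun ω => (Z ω, X ω)) = entH μ (fun ω => (X ω, Z ω)) :=
    entH_comp_of_injective (fun ω => (X ω, Z ω)) (φ := Prod.swap) Prod.swap_injective
  have hrotate : entH μ (fun ω => (Y ω, Z ω, X ω)) = entH μ (fun ω => (X ω, Y ω, Z ω)) :=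
    entH_comp_of_injective (fun ω => (X ω, Y ω, Z ω)) (φ := fun q => (q.2.1, q.2.2, q.1))
      (Function.LeftInverse.injective (g := fun q => (q.2.2, q.1, q.2.1)) fun _ => rfl)
  have hindep := entH_prodMk_of_indepFun hY hZ hYZ
  have hmut := condMutInf_nonneg (μ := μ) hY hZ hX
  have hcond := condEnt_nonneg (μ := μ) hX (hY.prodMk hZ)
  unfold condMutInf at hmut
  unfold condEnt at hcond ⊢
  linarith

end CondEnt

section Independence

variable {Ω E F G : Type*} [MeasurableSpace Ω] {μ : Measure Ω}
  [MeasurableSpace E] [MeasurableSpace F] [MeasurableSpace G]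
  {X : Ω → E} {Y : Ω → F} {Z : Ω → G}

lemma indepFun_of_measure_inter_preimage_singleton [IsFiniteMeasure μ] [Countable E] [Countable F]
    [MeasurableSingletonClass E] [MeasurableSingletonClass F]
    (hX : Measurable X) (hY : Measurable Y)
    (h : ∀ e f, μ (X ⁻¹' {e} ∩ Y ⁻¹' {f}) = μ (X ⁻¹' {e}) * μ (Y ⁻¹' {f})) :
    IndepFun X Y μ := by
  rw [indepFun_iff_map_prod_eq_prod_map_map hX.aemeasurable hY.aemeasurable,
    Measure.ext_iff_singleton]
  rintro ⟨e, f⟩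
  rw [Measure.map_apply (hX.prodMk hY) (measurableSet_singleton _), ← Set.singleton_prod_singleton,
    Set.mk_preimage_prod, h, Measure.prod_prod, Measure.map_apply hX (measurableSet_singleton e),
    Measure.map_apply hY (measurableSet_singleton f)]

lemma measure_inter_eq_mul_of_measure_inter_inter_eq_mul [IsProbabilityMeasure μ] [Finite E]
    [MeasurableSingletonClass E] (hX : Measurable X) {s t : Set Ω}
    (h : ∀ e, μ (X ⁻¹' {e} ∩ s ∩ t) = μ (X ⁻¹' {e}) * μ s * μ t) : μ (s ∩ t) = μ s * μ t := by
  cases nonempty_fintype E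
  have htotal : ∑ e, μ (X ⁻¹' {e}) = 1 := by
    simpa using sum_measure_preimage_singleton_inter (μ := μ) hX Set.univ
  rw [← sum_measure_preimage_singleton_inter hX (s ∩ t)]
  simp only [← Set.inter_assoc, h, ← Finset.sum_mul, htotal, one_mul]

variable [IsProbabilityMeasure μ] [Finite E] [Countable F] [Countable G]
  [MeasurableSingletonClass E] [MeasurableSingletonClass F] [MeasurableSingletonClass G]

lemma indepFun_snd_thd_of_measure_inter_preimage_singleton
    (hX : Measurable X) (hY : Measurable Y) (hZ : Measurable Z)
    (h : ∀ e f g, μ (X ⁻¹' {e} ∩ Y ⁻¹' {f} ∩ Z ⁻¹' {g}) =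
      μ (X ⁻¹' {e}) * μ (Y ⁻¹' {f}) * μ (Z ⁻¹' {g})) :
    IndepFun Y Z μ :=
  indepFun_of_measure_inter_preimage_singleton hY hZ fun f g =>
    measure_inter_eq_mul_of_measure_inter_inter_eq_mul hX fun e => h e f g

lemma indepFun_fst_prodMk_of_measure_inter_preimage_singleton
    (hX : Measurable X) (hY : Measurable Y) (hZ : Measurable Z)
    (h : ∀ e f g, μ (X ⁻¹' {e} ∩ Y ⁻¹' {f} ∩ Z ⁻¹' {g}) =
      μ (X ⁻¹' {e}) * μ (Y ⁻¹' {f}) * μ (Z ⁻¹' {g})) :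
    IndepFun X (fun ω => (Y ω, Z ω)) μ := by
  refine indepFun_of_measure_inter_preimage_singleton hX (hY.prodMk hZ) ?_
  rintro e ⟨f, g⟩
  have hYZ : μ (Y ⁻¹' {f} ∩ Z ⁻¹' {g}) = μ (Y ⁻¹' {f}) * μ (Z ⁻¹' {g}) :=
    measure_inter_eq_mul_of_measure_inter_inter_eq_mul hX fun e => h e f g
  rw [← Set.singleton_prod_singleton, Set.mk_preimage_prod, ← Set.inter_assoc, h, hYZ, mul_assoc]

end Independence

/-- This covers outputs computed with private randomness: `X` need not be a function of `(B, C)`,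
and the noise of `Y` and `Z` can be made part of `A`. -/
theorem triangle_marginal_inequality_one_general
    {Ω EA EB EC EX EY EZ : Type*} [MeasurableSpace Ω]
    [Finite EA] [Finite EB] [Finite EC] [Fintype EX] [Fintype EY] [Fintype EZ]
    [MeasurableSpace EA] [MeasurableSingletonClass EA]
    [MeasurableSpace EB] [MeasurableSingletonClass EB]
    [MeasurableSpace EC] [MeasurableSingletonClass EC]
    [MeasurableSpace EX] [MeasurableSingletonClass EX]
    (μ : Measure Ω) [IsProbabilityMeasure μ]
    (A : Ω → EA) (B : Ω → EB) (C : Ω → EC) (X : Ω → EX)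
    (hA : Measurable A) (hB : Measurable B) (hC : Measurable C) (hX : Measurable X)
    (hBC : IndepFun B C μ)
    (hAXB : IndepFun A (fun ω => (X ω, B ω)) μ) (hAXC : IndepFun A (fun ω => (X ω, C ω)) μ)
    (g : EA → EC → EY) (h : EA → EB → EZ) (Y : Ω → EY) (Z : Ω → EZ)
    (hY : ∀ ω, Y ω = g (A ω) (C ω)) (hZ : ∀ ω, Z ω = h (A ω) (B ω)) :
    0 ≤ -entH μ X - entH μ Y - entH μ Z
      + entH μ (fun ω => (X ω, Y ω)) + entH μ (fun ω => (X ω, Z ω)) := by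
  cases nonempty_fintype EA
  cases nonempty_fintype EB
  cases nonempty_fintype EC
  obtain rfl : Y = fun ω => g (A ω) (C ω) := funext hY
  obtain rfl : Z = fun ω => h (A ω) (B ω) := funext hZ
  have hXC : condEnt μ X C ≤ condEnt μ X (fun ω => g (A ω) (C ω)) :=
    condEnt_prodMk_of_indepFun hX hC hA hAXC ▸
      condEnt_le_condEnt_comp hX (hA.prodMk hC) fun p => g p.1 p.2
  have hXB : condEnt μ X B ≤ condEnt μ X (fun ω => h (A ω) (B ω)) :=
    condEnt_prodMk_of_indepFun hX hB hA hAXB ▸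
      condEnt_le_condEnt_comp hX (hA.prodMk hB) fun p => h p.1 p.2
  have hXBC := entH_le_condEnt_add_condEnt_of_indepFun hX hB hC hBC
  unfold condEnt at hXC hXB hXBC
  linarith

/-- **First marginal entropy inequality for the classical triangle scenario**:
`-H(X) - H(Y) - H(Z) + H(X,Y) + H(X,Z) ≥ 0`. -/
theorem triangle_marginal_inequality_one
    {Ω EA EB EC EX EY EZ : Type*} [MeasurableSpace Ω]
    [Fintype EA] [Fintype EB] [Fintype EC] [Fintype EX] [Fintype EY] [Fintype EZ]
    [MeasurableSpace EA] [MeasurableSingletonClass EA]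
    [MeasurableSpace EB] [MeasurableSingletonClass EB]
    [MeasurableSpace EC] [MeasurableSingletonClass EC]
    (μ : Measure Ω) [IsProbabilityMeasure μ]
    (A : Ω → EA) (B : Ω → EB) (C : Ω → EC)
    (hA : Measurable A) (hB : Measurable B) (hC : Measurable C)
    (hindep : ∀ (a : EA) (b : EB) (c : EC),
      μ (A ⁻¹' {a} ∩ B ⁻¹' {b} ∩ C ⁻¹' {c})
        = μ (A ⁻¹' {a}) * μ (B ⁻¹' {b}) * μ (C ⁻¹' {c}))
    (f : EB → EC → EX) (g : EA → EC → EY) (h : EA → EB → EZ)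
    (X : Ω → EX) (Y : Ω → EY) (Z : Ω → EZ)
    (hX : ∀ ω, X ω = f (B ω) (C ω)) (hY : ∀ ω, Y ω = g (A ω) (C ω))
    (hZ : ∀ ω, Z ω = h (A ω) (B ω)) :
    0 ≤ -entH μ X - entH μ Y - entH μ Z
      + entH μ (fun ω => (X ω, Y ω)) + entH μ (fun ω => (X ω, Z ω)) := by
  let _ : MeasurableSpace EX := ⊤
  obtain rfl : X = fun ω => f (B ω) (C ω) := funext hX
  have hBC := indepFun_snd_thd_of_measure_inter_preimage_singleton hA hB hC hindep
  have hABC := indepFun_fst_prodMk_of_measure_inter_preimage_singleton hA hB hC hindep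
  have hf : Measurable fun p : EB × EC => f p.1 p.2 := measurable_of_finite _
  exact triangle_marginal_inequality_one_general μ A B C _ hA hB hC
    (hf.comp (hB.prodMk hC)) hBC (hABC.comp measurable_id (hf.prodMk measurable_fst))
    (hABC.comp measurable_id (hf.prodMk measurable_snd)) g h Y Z hY hZ
end

section
/- Second marginal entropy inequality for the classical triangle scenario: let A, B, C be mutually independent finite random variables and let X = f(B, C), Y = g(A, C), Z = h(A, B) for deterministic functions f, g, h. Then -5H(X) - 5H(Y) - 5H(Z) + 4H(X,Y) + 4H(X,Z) + 4H(Y,Z) - 2H(X,Y,Z) ≥ 0, where H denotes the Shannon entropy of the indicated joint random variable. -/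
open MeasureTheory ProbabilityTheory

/-!
Let `F` be the sum of `H(A, Y)`, `H(A, Z)`, `H(B, X)`, `H(B, Z)`, `H(C, X)` and `H(C, Y)`.
Given `C`, the variable `X` depends only on `B` and `Y` only on `A`, so data processing yields
`I(X : Y) ≤ I(X : C)`; the six inequalities of this kind add up to
`F + 2 ∑ H(X) ≤ 2 ∑ H(A) + 2 ∑ H(X, Y)`, each sum running over the triangle. In the other
direction, the nonnegativity of `I(A : X | Y)`, `I(A : X | Z)`, `I(Y : Z | A, X)`, of their
rotations, and of the total correlation of `A, B, C` given `(X, Y, Z)` adds up to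
`2 H(X, Y, Z) + 2 ∑ H(A) + 3 ∑ H(X) ≤ F + 2 ∑ H(X, Y)`. Eliminating `F` gives the theorem.

Both bounds use only the submodularity of entropy on the lattice of partitions of the joint range
of `(A, B, C)`, in which joint variables are infima.
-/

/-- A normalised submodular function on a meet-semilattice: the entropy of random variables ordered
by `a ≤ b` if `a` determines `b`, so that `a ⊓ b` is the joint variable and `⊤` a constant. This is
the order dual of the usual rank function of a polymatroid; submodularity is stated for any common
upper bound `d`, not only for a join, so the case `a = b` says that `K` is antitone. -/
structure IsPolymatroidRank {L : Type*} [SemilatticeInf L] [OrderTop L] (K : L → ℝ) : Prop where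
  map_top : K ⊤ = 0
  map_inf_add_le ⦃a b d : L⦄ (ha : a ≤ d) (hb : b ≤ d) : K (a ⊓ b) + K d ≤ K a + K b

namespace IsPolymatroidRank

variable {L : Type*} [SemilatticeInf L] [OrderTop L] {K : L → ℝ} {a b c d u v x y z : L}

lemma map_inf_le_add (hK : IsPolymatroidRank K) (a b : L) : K (a ⊓ b) ≤ K a + K b := by
  simpa [hK.map_top] using hK.map_inf_add_le (le_top (a := a)) (le_top (a := b))

lemma map_inf_inf_add_two_mul_le (hK : IsPolymatroidRank K) (h : a ⊓ (b ⊓ c) ≤ d) :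
    K (a ⊓ (b ⊓ c)) + 2 * K d ≤ K (a ⊓ d) + K (b ⊓ d) + K (c ⊓ d) := by
  have hbc := hK.map_inf_add_le (inf_le_right : b ⊓ d ≤ d) (inf_le_right : c ⊓ d ≤ d)
  have habc := hK.map_inf_add_le (inf_le_right : a ⊓ d ≤ d) (inf_le_right : b ⊓ c ⊓ d ≤ d)
  rw [← inf_inf_distrib_right] at hbc habc
  rw [inf_eq_left.2 h] at habc
  linarith

lemma map_inf_eq_add_of_le (hK : IsPolymatroidRank K) (h : K (a ⊓ u) = K a + K u) (huv : u ≤ v) :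
    K (a ⊓ v) = K a + K v := by
  have hsub := hK.map_inf_add_le (inf_le_right : a ⊓ v ≤ v) huv
  rw [inf_assoc, inf_eq_right.2 huv] at hsub
  linarith [hK.map_inf_le_add a v]

lemma map_inf_eq_add_of_map_inf_inf (hK : IsPolymatroidRank K)
    (h : K (a ⊓ (b ⊓ c)) = K a + K b + K c) :
    K (a ⊓ (b ⊓ c)) = K a + K (b ⊓ c) := by
  linarith [hK.map_inf_le_add b c, hK.map_inf_le_add a (b ⊓ c)]

lemma data_processing (hK : IsPolymatroidRank K) (h : K (a ⊓ (c ⊓ x)) = K a + K (c ⊓ x))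
    (hy : a ⊓ c ≤ y) : K (c ⊓ x) + K y ≤ K c + K (x ⊓ y) := by
  have hjoint : a ⊓ c ⊓ (x ⊓ y) = a ⊓ (c ⊓ x) := by
    rw [← inf_assoc, inf_assoc a c x, inf_eq_left]
    exact (inf_le_inf_left a inf_le_left).trans hy
  have hsub := hK.map_inf_add_le hy (inf_le_right : x ⊓ y ≤ y)
  rw [hjoint] at hsub
  linarith [hK.map_inf_le_add a c]

lemma map_inf_inf_inf_add_le (hK : IsPolymatroidRank K) (h : K (a ⊓ x) = K a + K x) (y z : L) :
    K (a ⊓ (x ⊓ (y ⊓ z))) + (K a + K x + K y + K z)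
      ≤ K (a ⊓ y) + K (a ⊓ z) + K (x ⊓ y) + K (x ⊓ z) := by
  have hy := hK.map_inf_add_le (inf_le_right : a ⊓ y ≤ y) (inf_le_right : x ⊓ y ≤ y)
  have hz := hK.map_inf_add_le (inf_le_right : a ⊓ z ≤ z) (inf_le_right : x ⊓ z ≤ z)
  have hx := hK.map_inf_add_le (inf_le_left : a ⊓ x ⊓ y ≤ a ⊓ x) (inf_le_left : a ⊓ x ⊓ z ≤ a ⊓ x)
  rw [← inf_inf_distrib_right] at hy hz
  rw [← inf_inf_distrib_left, inf_assoc] at hx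
  linarith

theorem triangle_inequality_two (hK : IsPolymatroidRank K) (h : K (a ⊓ (b ⊓ c)) = K a + K b + K c)
    (hx : b ⊓ c ≤ x) (hy : a ⊓ c ≤ y) (hz : a ⊓ b ≤ z) :
    5 * (K x + K y + K z) + 2 * K (x ⊓ (y ⊓ z))
      ≤ 4 * (K (x ⊓ y) + K (x ⊓ z) + K (y ⊓ z)) := by
  have ha : K (a ⊓ (b ⊓ c)) = K a + K (b ⊓ c) := hK.map_inf_eq_add_of_map_inf_inf h
  have hb : K (b ⊓ (a ⊓ c)) = K b + K (a ⊓ c) :=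
    hK.map_inf_eq_add_of_map_inf_inf (by rw [inf_left_comm, h]; ring)
  have hc : K (c ⊓ (a ⊓ b)) = K c + K (a ⊓ b) :=
    hK.map_inf_eq_add_of_map_inf_inf (by rw [inf_comm, inf_assoc, h]; ring)
  have upper {a c u x y : L} (h : K (a ⊓ u) = K a + K u) (hc : u ≤ c) (hx : u ≤ x)
      (hy : a ⊓ c ≤ y) : K (c ⊓ x) + K y ≤ K c + K (x ⊓ y) :=
    hK.data_processing (hK.map_inf_eq_add_of_le h (le_inf hc hx)) hy
  have hcx := upper ha inf_le_right hx hy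
  have hbx := upper ha inf_le_left hx hz
  have hcy := upper hb inf_le_right hy hx
  have hay := upper hb inf_le_left hy (inf_comm a b ▸ hz)
  have hbz := upper hc inf_le_right hz (inf_comm b c ▸ hx)
  have haz := upper hc inf_le_left hz (inf_comm a c ▸ hy)
  have hax := hK.map_inf_inf_inf_add_le (hK.map_inf_eq_add_of_le ha hx) y z
  have hby := hK.map_inf_inf_inf_add_le (hK.map_inf_eq_add_of_le hb hy) x z
  have hcz := hK.map_inf_inf_inf_add_le (hK.map_inf_eq_add_of_le hc hz) x y
  have hle : a ⊓ (b ⊓ c) ≤ x ⊓ (y ⊓ z) := le_inf (inf_le_right.trans hx)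
    (le_inf ((inf_le_inf_left a inf_le_right).trans hy) ((inf_le_inf_left a inf_le_left).trans hz))
  have habc := hK.map_inf_inf_add_two_mul_le hle
  rw [h] at habc
  simp only [inf_comm y x, inf_comm z x, inf_comm z y, inf_left_comm y x, inf_left_comm z x]
    at hcy hbz haz hby hcz
  linarith

end IsPolymatroidRank

section PartitionEntropy

variable {W : Type*} [Fintype W] {p : W → ℝ} {a b d r : Setoid W} {v w : W}

open Classical in
/-- The total weight under `p` of the equivalence class of `w`, i.e. the probability of the event
that `w` represents in the partition `r`. -/
noncomputable def classMass (p : W → ℝ) (r : Setoid W) (w : W) : ℝ :=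
  ∑ v with r w v, p v

/-- Shannon entropy of the partition `r` for the weights `p`, as the expected value of
`-log` of the mass of the class of a random point. Points of weight `0` contribute nothing, even
if their class has mass `0`. -/
noncomputable def partitionEntropy (p : W → ℝ) (r : Setoid W) : ℝ :=
  -∑ w, p w * Real.log (classMass p r w)

lemma classMass_congr (h : r v w) : classMass p r v = classMass p r w := by
  classical
  exact Finset.sum_congr
    (Finset.filter_congr fun _ _ => ⟨r.trans (r.symm h), r.trans h⟩) fun _ _ => rfl

lemma classMass_nonneg (hp : 0 ≤ p) (r : Setoid W) (w : W) : 0 ≤ classMass p r w :=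
  Finset.sum_nonneg fun v _ => hp v

lemma le_classMass (hp : 0 ≤ p) (r : Setoid W) (w : W) : p w ≤ classMass p r w :=
  Finset.single_le_sum (fun v _ => hp v) (by simp)

open Classical in
lemma sum_inter_div_classMass_inf_le_one (p : W → ℝ) (a b : Setoid W) (u v : W) :
    ∑ w with a u w ∧ b v w, p w / classMass p (a ⊓ b) w ≤ 1 := by
  by_cases! h : ∃ t, a u t ∧ b v t
  · obtain ⟨t, hu, hv⟩ := h
    calc ∑ w with a u w ∧ b v w, p w / classMass p (a ⊓ b) w
        = ∑ w with (a ⊓ b) t w, p w / classMass p (a ⊓ b) t := by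
          refine Finset.sum_congr (Finset.filter_congr fun w _ => ?_) fun w hw => ?_
          · exact and_congr ⟨a.trans (a.symm hu), a.trans hu⟩ ⟨b.trans (b.symm hv), b.trans hv⟩
          · rw [classMass_congr (Finset.mem_filter.1 hw).2]
      _ = classMass p (a ⊓ b) t / classMass p (a ⊓ b) t := (Finset.sum_div _ _ _).symm
      _ ≤ 1 := div_self_le_one _
  · rw [Finset.sum_eq_zero fun w hw => absurd (Finset.mem_filter.1 hw).2 (by simpa using h w)]
    exact zero_le_one

open Classical in
lemma sum_class_mul_classMass_div_le (hp : 0 ≤ p) (ha : a ≤ d) (hb : b ≤ d) (v : W) :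
    ∑ w with b v w, p w * classMass p a w / classMass p (a ⊓ b) w ≤ classMass p d v := by
  calc ∑ w with b v w, p w * classMass p a w / classMass p (a ⊓ b) w
      = ∑ w with b v w, ∑ u with a w u, p u * (p w / classMass p (a ⊓ b) w) := by
        refine Finset.sum_congr rfl fun w _ => ?_
        rw [← Finset.sum_mul, ← classMass]
        ring
    _ = ∑ u with d v u, ∑ w with a u w ∧ b v w, p u * (p w / classMass p (a ⊓ b) w) := by
        refine Finset.sum_comm' fun w u => ?_
        simp only [Finset.mem_filter_univ]
        exact ⟨fun ⟨hvw, hwu⟩ => ⟨⟨a.symm hwu, hvw⟩, d.trans (hb hvw) (ha hwu)⟩,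
          fun ⟨⟨huw, hvw⟩, _⟩ => ⟨hvw, a.symm huw⟩⟩
    _ ≤ ∑ u with d v u, p u := by
        refine Finset.sum_le_sum fun u _ => ?_
        rw [← Finset.mul_sum]
        exact mul_le_of_le_one_right (hp u) (sum_inter_div_classMass_inf_le_one p a b u v)

lemma sum_mul_classMass_ratio_le (hp : 0 ≤ p) (ha : a ≤ d) (hb : b ≤ d) :
    ∑ w, p w * (classMass p a w * classMass p b w / (classMass p (a ⊓ b) w * classMass p d w))
      ≤ ∑ w, p w := by
  classical
  calc ∑ w, p w * (classMass p a w * classMass p b w / (classMass p (a ⊓ b) w * classMass p d w))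
      = ∑ w, ∑ v with b w v,
          p v / classMass p d v * (p w * classMass p a w / classMass p (a ⊓ b) w) := by
        refine Finset.sum_congr rfl fun w _ => ?_
        have hmass : ∑ v with b w v, p v / classMass p d v = classMass p b w / classMass p d w := by
          rw [classMass, Finset.sum_div]
          exact Finset.sum_congr rfl fun v hv =>
            by rw [classMass_congr (hb (Finset.mem_filter.1 hv).2)]
        rw [← Finset.sum_mul, hmass]
        ring
    _ = ∑ v, p v / classMass p d v *
          ∑ w with b v w, p w * classMass p a w / classMass p (a ⊓ b) w := by
        simp_rw [Finset.mul_sum]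
        exact Finset.sum_comm' fun w v => by simp [b.comm']
    _ ≤ ∑ v, p v / classMass p d v * classMass p d v := by
        gcongr with v
        · exact div_nonneg (hp v) (classMass_nonneg hp d v)
        · exact sum_class_mul_classMass_div_le hp ha hb v
    _ ≤ ∑ v, p v := by
        gcongr with v
        rw [div_mul_eq_mul_div, mul_div_assoc]
        exact mul_le_of_le_one_right (hp v) (div_self_le_one _)

lemma mul_log_classMass_add_le (hp : 0 ≤ p) (a b d : Setoid W) (w : W) :
    p w * Real.log (classMass p a w) + p w * Real.log (classMass p b w)
      ≤ p w * Real.log (classMass p (a ⊓ b) w) + p w * Real.log (classMass p d w)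
        + (p w * (classMass p a w * classMass p b w /
            (classMass p (a ⊓ b) w * classMass p d w)) - p w) := by
  rcases (hp w).eq_or_lt with hw | hw
  · simp [← hw]
  have hpos (r : Setoid W) : 0 < classMass p r w := hw.trans_le (le_classMass hp r w)
  have hlog := Real.log_le_sub_one_of_pos
    (div_pos (mul_pos (hpos a) (hpos b)) (mul_pos (hpos (a ⊓ b)) (hpos d)))
  rw [Real.log_div (mul_pos (hpos a) (hpos b)).ne' (mul_pos (hpos _) (hpos d)).ne',
    Real.log_mul (hpos a).ne' (hpos b).ne', Real.log_mul (hpos _).ne' (hpos d).ne'] at hlog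
  linarith [mul_le_mul_of_nonneg_left hlog hw.le]

lemma isPolymatroidRank_partitionEntropy (hp : 0 ≤ p) (hsum : ∑ w, p w = 1) :
    IsPolymatroidRank (partitionEntropy p) where
  map_top := by simp [partitionEntropy, classMass, Setoid.top_def, hsum]
  map_inf_add_le a b d ha hb := by
    have hgibbs := Finset.sum_le_sum (s := Finset.univ) fun w _ =>
      mul_log_classMass_add_le hp a b d w
    simp only [Finset.sum_add_distrib, Finset.sum_sub_distrib] at hgibbs
    simp only [partitionEntropy]
    linarith [sum_mul_classMass_ratio_le hp ha hb]

end PartitionEntropy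

lemma sum_negMulLog_mul {ι κ : Type*} [Fintype ι] [Fintype κ] {p : ι → ℝ} {q : κ → ℝ}
    (hp : ∑ i, p i = 1) (hq : ∑ j, q j = 1) :
    ∑ ij : ι × κ, Real.negMulLog (p ij.1 * q ij.2)
      = ∑ i, Real.negMulLog (p i) + ∑ j, Real.negMulLog (q j) := by
  simp_rw [Real.negMulLog_mul, Finset.sum_add_distrib, Fintype.sum_prod_type, ← Finset.sum_mul,
    ← Finset.mul_sum, ← Finset.sum_mul, hp, hq, one_mul]

lemma ker_prodMk {W E F : Type*} (φ : W → E) (ψ : W → F) :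
    Setoid.ker (fun w => (φ w, ψ w)) = Setoid.ker φ ⊓ Setoid.ker ψ := by
  ext v w
  simp [Setoid.ker_def, Setoid.inf_iff_and]

section Entropy

variable {Ω W E : Type*} [MeasurableSpace Ω] [Fintype W] [MeasurableSpace W]
  [MeasurableSingletonClass W] {μ : Measure Ω} {V : Ω → W}

lemma sum_measureReal_fiber_eq_one [IsProbabilityMeasure μ] (hV : Measurable V) :
    ∑ w, μ.real (V ⁻¹' {w}) = 1 := by
  simpa using sum_measureReal_preimage_singleton Finset.univ (μ := μ)
    fun w _ => hV (measurableSet_singleton w)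

lemma measureReal_preimage_comp [IsFiniteMeasure μ] [DecidableEq E] (hV : Measurable V)
    (φ : W → E) (e : E) :
    μ.real ((fun ω => φ (V ω)) ⁻¹' {e}) = ∑ w with φ w = e, μ.real (V ⁻¹' {w}) := by
  rw [sum_measureReal_preimage_singleton _ fun w _ => hV (measurableSet_singleton w)]
  congr 1
  ext ω
  simp

lemma entH_comp [IsFiniteMeasure μ] [Fintype E] (hV : Measurable V) (φ : W → E) :
    entH μ (fun ω => φ (V ω))
      = partitionEntropy (fun w => μ.real (V ⁻¹' {w})) (Setoid.ker φ) := by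
  classical
  have hmass (w : W) : classMass (fun w => μ.real (V ⁻¹' {w})) (Setoid.ker φ) w
      = μ.real ((fun ω => φ (V ω)) ⁻¹' {φ w}) := by
    rw [measureReal_preimage_comp hV, classMass]
    simp [Setoid.ker_def, eq_comm]
  calc entH μ (fun ω => φ (V ω))
      = ∑ e, -∑ w with φ w = e, μ.real (V ⁻¹' {w}) *
          Real.log (μ.real ((fun ω => φ (V ω)) ⁻¹' {φ w})) := by
        refine Finset.sum_congr rfl fun e _ => ?_
        rw [← measureReal_def, Real.negMulLog, neg_mul]
        nth_rw 1 [measureReal_preimage_comp hV]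
        rw [Finset.sum_mul]
        exact congrArg _ (Finset.sum_congr rfl fun w hw => by rw [(Finset.mem_filter.1 hw).2])
    _ = partitionEntropy (fun w => μ.real (V ⁻¹' {w})) (Setoid.ker φ) := by
        simp only [partitionEntropy, hmass]
        rw [Finset.sum_neg_distrib, ← Finset.sum_fiberwise Finset.univ φ]

lemma entH_prodMk_prodMk_of_indep {EA EB EC : Type*} [Fintype EA] [Fintype EB] [Fintype EC]
    [MeasurableSpace EA] [MeasurableSingletonClass EA]
    [MeasurableSpace EB] [MeasurableSingletonClass EB]
    [MeasurableSpace EC] [MeasurableSingletonClass EC] [IsProbabilityMeasure μ]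
    {A : Ω → EA} {B : Ω → EB} {C : Ω → EC}
    (hA : Measurable A) (hB : Measurable B) (hC : Measurable C)
    (hindep : ∀ a b c, μ (A ⁻¹' {a} ∩ B ⁻¹' {b} ∩ C ⁻¹' {c})
        = μ (A ⁻¹' {a}) * μ (B ⁻¹' {b}) * μ (C ⁻¹' {c})) :
    entH μ (fun ω => (A ω, B ω, C ω)) = entH μ A + entH μ B + entH μ C := by
  have hfiber (w : EA × EB × EC) : (fun ω => (A ω, B ω, C ω)) ⁻¹' {w}
      = A ⁻¹' {w.1} ∩ B ⁻¹' {w.2.1} ∩ C ⁻¹' {w.2.2} := by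
    ext ω
    simp [Prod.ext_iff, and_assoc]
  have hBC : ∑ v : EB × EC, μ.real (B ⁻¹' {v.1}) * μ.real (C ⁻¹' {v.2}) = 1 := by
    simp_rw [Fintype.sum_prod_type, ← Finset.mul_sum, sum_measureReal_fiber_eq_one hC, mul_one,
      sum_measureReal_fiber_eq_one hB]
  simp only [entH, hfiber, hindep, ENNReal.toReal_mul, mul_assoc, ← measureReal_def]
  rw [sum_negMulLog_mul (sum_measureReal_fiber_eq_one hA) hBC, add_assoc,
    sum_negMulLog_mul (sum_measureReal_fiber_eq_one hB) (sum_measureReal_fiber_eq_one hC)]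

end Entropy

/-- **Second marginal entropy inequality for the classical triangle scenario**:
`-5H(X) - 5H(Y) - 5H(Z) + 4H(X,Y) + 4H(X,Z) + 4H(Y,Z) - 2H(X,Y,Z) ≥ 0`. -/
theorem triangle_marginal_inequality_two
    {Ω EA EB EC EX EY EZ : Type*} [MeasurableSpace Ω]
    [Fintype EA] [Fintype EB] [Fintype EC] [Fintype EX] [Fintype EY] [Fintype EZ]
    [MeasurableSpace EA] [MeasurableSingletonClass EA]
    [MeasurableSpace EB] [MeasurableSingletonClass EB]
    [MeasurableSpace EC] [MeasurableSingletonClass EC]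
    (μ : Measure Ω) [IsProbabilityMeasure μ]
    (A : Ω → EA) (B : Ω → EB) (C : Ω → EC)
    (hA : Measurable A) (hB : Measurable B) (hC : Measurable C)
    (hindep : ∀ (a : EA) (b : EB) (c : EC),
      μ (A ⁻¹' {a} ∩ B ⁻¹' {b} ∩ C ⁻¹' {c})
        = μ (A ⁻¹' {a}) * μ (B ⁻¹' {b}) * μ (C ⁻¹' {c}))
    (f : EB → EC → EX) (g : EA → EC → EY) (h : EA → EB → EZ)
    (X : Ω → EX) (Y : Ω → EY) (Z : Ω → EZ)
    (hX : ∀ ω, X ω = f (B ω) (C ω)) (hY : ∀ ω, Y ω = g (A ω) (C ω))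
    (hZ : ∀ ω, Z ω = h (A ω) (B ω)) :
    0 ≤ -5 * entH μ X - 5 * entH μ Y - 5 * entH μ Z
      + 4 * entH μ (fun ω => (X ω, Y ω)) + 4 * entH μ (fun ω => (X ω, Z ω))
      + 4 * entH μ (fun ω => (Y ω, Z ω))
      - 2 * entH μ (fun ω => (X ω, Y ω, Z ω)) := by
  obtain rfl : X = fun ω => f (B ω) (C ω) := funext hX
  obtain rfl : Y = fun ω => g (A ω) (C ω) := funext hY
  obtain rfl : Z = fun ω => h (A ω) (B ω) := funext hZ
  have hV : Measurable fun ω => (A ω, B ω, C ω) := hA.prodMk (hB.prodMk hC)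
  have hrank := isPolymatroidRank_partitionEntropy (fun _ => measureReal_nonneg)
    (sum_measureReal_fiber_eq_one (μ := μ) hV)
  have htriangle := hrank.triangle_inequality_two
    (a := Setoid.ker fun w => w.1) (b := Setoid.ker fun w => w.2.1)
    (c := Setoid.ker fun w => w.2.2) (x := Setoid.ker fun w => f w.2.1 w.2.2)
    (y := Setoid.ker fun w => g w.1 w.2.2) (z := Setoid.ker fun w => h w.1 w.2.1)
    (by simpa only [← ker_prodMk, ← entH_comp hV]
          using entH_prodMk_prodMk_of_indep hA hB hC hindep)
    (fun _ _ hbc => congrArg₂ f hbc.1 hbc.2) (fun _ _ hac => congrArg₂ g hac.1 hac.2)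
    (fun _ _ hab => congrArg₂ h hab.1 hab.2)
  simp only [← ker_prodMk, ← entH_comp hV] at htriangle
  linarith
end
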